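/- For every 0 < α < 1 and every x ≥ 0, the value of the one-parameter Mittag-Leffler function at −x is strictly positive: E_α(−x) > 0. -/

import Mathlib

/-- One-parameter Mittag-Leffler function `E_α(z) = ∑ zⁿ / Γ(nα+1)`. -/
noncomputable def mlE (α z : ℝ) : ℝ := ∑' n : ℕ, z ^ n / Real.Gamma (n * α + 1)

open MeasureTheory Set Filter Topology

lemma ml_gamma_lower (s R : ℝ) (hs : 0 ≤ s) (hR : 0 < R) :
    R ^ s * Real.exp (-R) ≤ Real.Gamma (s + 1) := by
  rw [Real.Gamma_eq_integral (by linarith)]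
  have hint := Real.GammaIntegral_convergent (s := s + 1) (by linarith)
  have hsub : Ioi R ⊆ Ioi (0:ℝ) := Ioi_subset_Ioi hR.le
  calc R ^ s * Real.exp (-R) = ∫ x in Ioi R, R ^ s * Real.exp (-x) := by
        rw [integral_const_mul, integral_exp_neg_Ioi]
    _ ≤ ∫ x in Ioi R, Real.exp (-x) * x ^ (s + 1 - 1) := by
        apply setIntegral_mono_on
        · exact (integrableOn_exp_neg_Ioi R).const_mul _
        · exact hint.mono_set hsub
        · exact measurableSet_Ioi
        · intro x hx
          rw [mul_comm, add_sub_cancel_right]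
          have := Real.rpow_le_rpow hR.le (le_of_lt hx) hs
          gcongr
    _ ≤ _ := by
        apply setIntegral_mono_set hint
        · filter_upwards [ae_restrict_mem measurableSet_Ioi] with x hx
          have : (0:ℝ) < x := hx
          positivity
        · exact hsub.eventuallyLE

lemma ml_summable (α : ℝ) (hα : 0 < α) (x : ℝ) (hx : 0 ≤ x) :
    Summable fun n : ℕ => x ^ n / Real.Gamma (n * α + 1) := by
  set R : ℝ := (2 * x + 1) ^ (α⁻¹) with hR
  have hR0 : 0 < R := by positivity
  have hRa : R ^ α = 2 * x + 1 := by
    rw [hR, Real.rpow_inv_rpow (by linarith) hα.ne']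
  have hlt : x / (2 * x + 1) < 1 := by rw [div_lt_one (by linarith)]; linarith
  refine Summable.of_nonneg_of_le (f := fun n : ℕ => Real.exp R * (x / (2 * x + 1)) ^ n) ?_ ?_
    ((summable_geometric_of_lt_one (by positivity) hlt).mul_left _)
  · intro n
    have := Real.Gamma_pos_of_pos (s := n * α + 1) (by positivity)
    positivity
  · intro n
    have h := ml_gamma_lower (n * α) R (by positivity) hR0
    rw [mul_comm (n:ℝ) α, Real.rpow_mul hR0.le, hRa, Real.rpow_natCast] at h
    rw [mul_comm (n:ℝ) α]
    calc x ^ n / Real.Gamma (α * n + 1) ≤ x ^ n / ((2 * x + 1) ^ n * Real.exp (-R)) := by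
          gcongr
      _ = _ := by rw [Real.exp_neg, div_pow]; field_simp

lemma ml_bound (β s : ℝ) (hβ : 0 < β) (h0 : 0 ≤ s) (h1 : s ≤ 1) :
    1 - s ^ β ≤ (β + 1) * (1 - s) := by
  rcases le_total 1 β with h | h
  · have := one_add_mul_self_le_rpow_one_add (s := s - 1) (by linarith) h
    rw [add_sub_cancel] at this
    nlinarith
  · have : s ^ (1:ℝ) ≤ s ^ β := Real.rpow_le_rpow_of_exponent_ge' h0 h1 hβ.le h
    rw [Real.rpow_one] at this
    nlinarith

lemma ml_beta (u v : ℝ) (hu : 0 < u) (hv : 0 < v) :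
    IntervalIntegrable (fun s : ℝ => s ^ (u - 1) * (1 - s) ^ (v - 1)) volume 0 1 ∧
    ∫ s in (0:ℝ)..1, s ^ (u - 1) * (1 - s) ^ (v - 1)
      = Real.Gamma u * Real.Gamma v / Real.Gamma (u + v) := by
  have hc := Complex.betaIntegral_convergent (u := u) (v := v) (by simpa) (by simpa)
  have heq : ∀ s ∈ Ioc (0:ℝ) 1, (s : ℂ) ^ ((u:ℂ) - 1) * (1 - (s : ℂ)) ^ ((v:ℂ) - 1)
      = ((s ^ (u - 1) * (1 - s) ^ (v - 1) : ℝ) : ℂ) := by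
    intro s hs
    rw [Complex.ofReal_mul, Complex.ofReal_cpow hs.1.le, Complex.ofReal_cpow (by linarith [hs.2])]
    push_cast; rfl
  constructor
  · rw [intervalIntegrable_iff_integrableOn_Ioc_of_le zero_le_one] at hc ⊢
    have h2 := (hc.congr_fun heq measurableSet_Ioc).re
    exact h2
  · have h := ProbabilityTheory.beta_eq_betaIntegralReal u v hu hv
    rw [ProbabilityTheory.beta] at h
    rw [h, Complex.betaIntegral, intervalIntegral.integral_of_le zero_le_one,
      intervalIntegral.integral_of_le zero_le_one,
      setIntegral_congr_fun measurableSet_Ioc heq]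
    have h3 := integral_ofReal (𝕜 := ℂ) (μ := volume.restrict (Ioc (0:ℝ) 1))
      (f := fun s : ℝ => s ^ (u - 1) * (1 - s) ^ (v - 1))
    exact (congrArg Complex.re h3).symm

lemma ml_kernel (α β : ℝ) (hα : 0 < α) (hα1 : α < 1) (hβ : 0 < β) :
    IntegrableOn (fun s : ℝ => (1 - s ^ β) * (1 - s) ^ (-α - 1)) (Ioc 0 1) ∧
    α * ∫ s in Ioc (0:ℝ) 1, (1 - s ^ β) * (1 - s) ^ (-α - 1)
      = -1 + Real.Gamma (β + 1) * Real.Gamma (1 - α) / Real.Gamma (β + 1 - α) := by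
  obtain ⟨hb, hbv⟩ := ml_beta β (1 - α) hβ (by linarith)
  have hone := (ml_beta 1 (1 - α) one_pos (by linarith)).1
  rw [show 1 - α - 1 = -α by ring] at hb hbv hone
  simp only [sub_self, Real.rpow_zero, one_mul] at hone
  have hK : IntegrableOn (fun s : ℝ => (1 - s ^ β) * (1 - s) ^ (-α - 1)) (Ioc 0 1) := by
    rw [intervalIntegrable_iff_integrableOn_Ioc_of_le zero_le_one] at hone
    refine Integrable.mono' (hone.const_mul (β + 1)) ?_ ?_
    · apply Measurable.aestronglyMeasurable
      fun_prop
    · filter_upwards [ae_restrict_mem measurableSet_Ioc] with s hs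
      have h1 : s ^ β ≤ 1 := Real.rpow_le_one hs.1.le hs.2 hβ.le
      rcases hs.2.eq_or_lt with rfl | hlt
      · simp [Real.zero_rpow (show -α ≠ 0 by linarith)]
      · have hp : 0 < 1 - s := by linarith
        rw [Real.norm_of_nonneg (mul_nonneg (by linarith) (by positivity))]
        calc _ ≤ (β + 1) * (1 - s) * (1 - s) ^ (-α - 1) := by
              have := ml_bound β s hβ hs.1.le hs.2
              gcongr
          _ = _ := by
              rw [Real.rpow_sub_one hp.ne']; field_simp
  refine ⟨hK, ?_⟩
  have hKi : IntervalIntegrable (fun s : ℝ => (1 - s ^ β) * (1 - s) ^ (-α - 1)) volume 0 1 := by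
    rwa [intervalIntegrable_iff_integrableOn_Ioc_of_le zero_le_one]
  have ftc := intervalIntegral.integral_eq_sub_of_hasDerivAt_of_le (a := 0) (b := 1)
    (f := fun s : ℝ => (1 - s ^ β) * (1 - s) ^ (-α))
    (f' := fun s : ℝ => α * ((1 - s ^ β) * (1 - s) ^ (-α - 1))
      - β * (s ^ (β - 1) * (1 - s) ^ (-α))) zero_le_one ?_ ?_ ?_
  · rw [intervalIntegral.integral_sub (hKi.const_mul _) (hb.const_mul _),
      intervalIntegral.integral_const_mul, intervalIntegral.integral_const_mul, hbv,
      intervalIntegral.integral_of_le zero_le_one] at ftc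
    simp only [Real.one_rpow, sub_self, zero_mul, sub_zero, Real.zero_rpow hβ.ne', one_mul] at ftc
    rw [Real.Gamma_add_one hβ.ne']
    rw [show β + (1 - α) = β + 1 - α by ring] at ftc
    linear_combination ftc
  · intro s hs
    rcases hs.2.eq_or_lt with rfl | hlt
    · unfold ContinuousWithinAt
      simp only [Real.one_rpow, sub_self, zero_mul]
      have hlim : Tendsto (fun s : ℝ => (β + 1) * (1 - s) ^ (1 - α)) (𝓝[Icc 0 1] 1) (𝓝 0) := by
        have : ContinuousAt (fun s : ℝ => (β + 1) * (1 - s) ^ (1 - α)) 1 := by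
          apply ContinuousAt.mul continuousAt_const
          apply ContinuousAt.rpow_const (by fun_prop)
          right; linarith
        have h2 := this.tendsto
        simp only [sub_self, Real.zero_rpow (show 1 - α ≠ 0 by linarith), mul_zero] at h2
        exact h2.mono_left nhdsWithin_le_nhds
      refine tendsto_of_tendsto_of_tendsto_of_le_of_le' tendsto_const_nhds hlim ?_ ?_
      · filter_upwards [self_mem_nhdsWithin] with s hs
        have h1 : s ^ β ≤ 1 := Real.rpow_le_one hs.1 hs.2 hβ.le
        have := hs.2
        exact mul_nonneg (by linarith) (Real.rpow_nonneg (by linarith) _)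
      · filter_upwards [self_mem_nhdsWithin] with s hs
        rcases hs.2.eq_or_lt with rfl | hlt
        · simp [Real.zero_rpow (show 1 - α ≠ 0 by linarith)]
        · have hp : 0 < 1 - s := by linarith
          calc _ ≤ (β + 1) * (1 - s) * (1 - s) ^ (-α) := by
                have := ml_bound β s hβ hs.1 hs.2
                gcongr
            _ = _ := by
                rw [sub_eq_add_neg 1 α, Real.rpow_add hp, Real.rpow_one]; ring
    · apply ContinuousAt.continuousWithinAt
      apply ContinuousAt.mul
      · exact continuousAt_const.sub (Real.continuousAt_rpow_const _ _ (Or.inr hβ.le))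
      · apply ContinuousAt.rpow_const (by fun_prop)
        left; linarith
  · intro s hs
    have h1 := (Real.hasDerivAt_rpow_const (x := s) (p := β) (Or.inl hs.1.ne')).const_sub 1
    have h2 := ((hasDerivAt_id s).const_sub 1).rpow_const (p := -α)
      (Or.inl (by simp only [id]; linarith [hs.2]))
    have h3 : HasDerivAt (fun s : ℝ => (1 - s ^ β) * (1 - s) ^ (-α)) _ s := h1.mul h2
    refine h3.congr_deriv ?_
    simp only [id]
    ring
  · exact (hKi.const_mul _).sub (hb.const_mul _)

lemma ml_summable' (α : ℝ) (hα : 0 < α) (x : ℝ) :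
    Summable fun n : ℕ => x ^ n / Real.Gamma (n * α + 1) := by
  refine Summable.of_norm ?_
  convert ml_summable α hα |x| (abs_nonneg x) using 2 with n
  have := Real.Gamma_pos_of_pos (s := n * α + 1) (by positivity)
  rw [norm_div, norm_pow, Real.norm_eq_abs, Real.norm_of_nonneg this.le]

lemma ml_continuousOn (α : ℝ) (hα : 0 < α) (X : ℝ) :
    ContinuousOn (fun y => mlE α (-y)) (Icc 0 X) := by
  unfold mlE
  refine continuousOn_tsum (u := fun n : ℕ => |X| ^ n / Real.Gamma (n * α + 1)) ?_
    (ml_summable α hα _ (abs_nonneg X)) ?_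
  · intro n; fun_prop
  · intro n y hy
    have := Real.Gamma_pos_of_pos (s := n * α + 1) (by positivity)
    rw [norm_div, norm_pow, norm_neg, Real.norm_of_nonneg this.le, Real.norm_of_nonneg hy.1]
    have := hy.1
    have : y ≤ |X| := hy.2.trans (le_abs_self X)
    gcongr

lemma ml_zero (α : ℝ) : mlE α 0 = 1 := by
  unfold mlE
  rw [tsum_eq_single 0]
  · simp
  · intro n hn; simp [hn]

lemma ml_shift (α : ℝ) (hα : 0 < α) (x s : ℝ) (hs : 0 ≤ s) :
    HasSum (fun n : ℕ => (-x) ^ (n + 1) / Real.Gamma ((n + 1 : ℕ) * α + 1) *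
      ((1 - s ^ ((n + 1 : ℕ) * α)) * (1 - s) ^ (-α - 1)))
      ((mlE α (-x) - mlE α (-(x * s ^ α))) * (1 - s) ^ (-α - 1)) := by
  have h1 : HasSum (fun n : ℕ => (-x) ^ n / Real.Gamma (n * α + 1)) (mlE α (-x)) :=
    (ml_summable' α hα _).hasSum
  have h2 : HasSum (fun n : ℕ => (-(x * s ^ α)) ^ n / Real.Gamma (n * α + 1))
      (mlE α (-(x * s ^ α))) := (ml_summable' α hα _).hasSum
  have h3 := (h1.sub h2).mul_right ((1 - s) ^ (-α - 1))
  have h4 := (hasSum_nat_add_iff' 1).2 h3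
  rw [Finset.sum_range_one, pow_zero, pow_zero, sub_self, zero_mul, sub_zero] at h4
  refine (congrArg (fun f => HasSum f _) (funext fun n => ?_)).mp h4
  rw [show -(x * s ^ α) = -x * s ^ α by ring, mul_pow (-x), ← Real.rpow_natCast (s ^ α),
    ← Real.rpow_mul hs, mul_comm α]
  ring

lemma ml_identity (α : ℝ) (hα : 0 < α) (hα1 : α < 1) (x : ℝ) :
    α * ∫ s in Ioc (0:ℝ) 1, (mlE α (-x) - mlE α (-(x * s ^ α))) * (1 - s) ^ (-α - 1)
      = 1 - mlE α (-x) - Real.Gamma (1 - α) * x * mlE α (-x) := by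
  have hG : ∀ n : ℕ, 0 < Real.Gamma (n * α + 1) := fun n =>
    Real.Gamma_pos_of_pos (by positivity)
  set c : ℕ → ℝ := fun n => (-x) ^ (n + 1) / Real.Gamma ((n + 1 : ℕ) * α + 1) with hc
  set K : ℕ → ℝ → ℝ := fun n s => (1 - s ^ ((n + 1 : ℕ) * α)) * (1 - s) ^ (-α - 1) with hKdef
  have hker := fun n : ℕ => ml_kernel α ((n + 1 : ℕ) * α) hα hα1 (by positivity)
  have hval : ∀ n : ℕ, (∫ s in Ioc (0:ℝ) 1, K n s) = α⁻¹ * (-1 +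
      Real.Gamma ((n + 1 : ℕ) * α + 1) * Real.Gamma (1 - α) / Real.Gamma (n * α + 1)) := by
    intro n
    have h := (hker n).2
    rw [show ((n + 1 : ℕ) : ℝ) * α + 1 - α = n * α + 1 by push_cast; ring] at h
    rw [← h, ← mul_assoc, inv_mul_cancel₀ hα.ne', one_mul]
  have hK0 : ∀ n, ∀ s ∈ Ioc (0:ℝ) 1, 0 ≤ K n s := by
    intro n s hs
    have h1 : s ^ ((n + 1 : ℕ) * α) ≤ 1 := Real.rpow_le_one hs.1.le hs.2 (by positivity)
    exact mul_nonneg (by linarith) (Real.rpow_nonneg (by linarith [hs.2]) _)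
  have alg : ∀ (y : ℝ) (n : ℕ), y ^ (n + 1) / Real.Gamma ((n + 1 : ℕ) * α + 1) * (α⁻¹ * (-1 +
      Real.Gamma ((n + 1 : ℕ) * α + 1) * Real.Gamma (1 - α) / Real.Gamma (n * α + 1)))
      = α⁻¹ * (-(y ^ (n + 1) / Real.Gamma ((n + 1 : ℕ) * α + 1))
        + Real.Gamma (1 - α) * y * (y ^ n / Real.Gamma (n * α + 1))) := by
    intro y n
    have h1 := (hG n).ne'
    have h2 := (hG (n + 1)).ne'
    field_simp
    ring
  have hsum : Summable fun n => ∫ s in Ioc (0:ℝ) 1, ‖c n * K n s‖ := by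
    have : ∀ n, ∫ s in Ioc (0:ℝ) 1, ‖c n * K n s‖ = |x| ^ (n + 1) / Real.Gamma ((n + 1 : ℕ) * α + 1)
        * (α⁻¹ * (-1 +
      Real.Gamma ((n + 1 : ℕ) * α + 1) * Real.Gamma (1 - α) / Real.Gamma (n * α + 1))) := by
      intro n
      rw [← hval, ← integral_const_mul]
      refine setIntegral_congr_fun measurableSet_Ioc fun s hs => ?_
      simp only [hc]
      rw [norm_mul, Real.norm_of_nonneg (hK0 n s hs), norm_div, norm_pow, norm_neg,
        Real.norm_eq_abs, Real.norm_of_nonneg (hG (n + 1)).le]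
    simp_rw [this, alg]
    have hs := ml_summable' α hα |x|
    have hs1 := (summable_nat_add_iff 1).2 hs
    exact (hs1.neg.add (hs.mul_left _)).mul_left _
  have H := hasSum_integral_of_summable_integral_norm (μ := volume.restrict (Ioc (0:ℝ) 1))
    (F := fun n s => c n * K n s) (fun n => (hker n).1.const_mul (c n)) hsum
  have hL : ∫ s in Ioc (0:ℝ) 1, ∑' n, c n * K n s =
      ∫ s in Ioc (0:ℝ) 1, (mlE α (-x) - mlE α (-(x * s ^ α))) * (1 - s) ^ (-α - 1) := by
    refine setIntegral_congr_fun measurableSet_Ioc fun s hs => ?_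
    exact (ml_shift α hα x s hs.1.le).tsum_eq
  rw [hL] at H
  have hs := ml_summable' α hα (-x)
  have hE : HasSum (fun n : ℕ => (-x) ^ n / Real.Gamma (n * α + 1)) (mlE α (-x)) := hs.hasSum
  have hE1 : HasSum (fun n : ℕ => (-x) ^ (n + 1) / Real.Gamma ((n + 1 : ℕ) * α + 1))
      (mlE α (-x) - 1) := by
    have := (hasSum_nat_add_iff' (f := fun n : ℕ => (-x) ^ n / Real.Gamma (n * α + 1)) 1).2 hE
    simpa using this
  have H2 := (hE1.neg.add (hE.mul_left (Real.Gamma (1 - α) * (-x)))).mul_left α⁻¹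
  have H3 : HasSum (fun n => ∫ s in Ioc (0:ℝ) 1, c n * K n s)
      (α⁻¹ * (-(mlE α (-x) - 1) + Real.Gamma (1 - α) * (-x) * mlE α (-x))) := by
    have hfun : (fun n => ∫ s in Ioc (0:ℝ) 1, c n * K n s) = fun n : ℕ =>
        α⁻¹ * (-((-x) ^ (n + 1) / Real.Gamma ((n + 1 : ℕ) * α + 1))
        + Real.Gamma (1 - α) * (-x) * ((-x) ^ n / Real.Gamma (n * α + 1))) := by
      funext n
      rw [integral_const_mul, hval]
      exact alg (-x) n
    rw [hfun]
    exact H2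
  rw [H.unique H3, ← mul_assoc, mul_inv_cancel₀ hα.ne']
  ring

theorem mlE_neg_pos (α : ℝ) (hα : 0 < α) (hα1 : α < 1) (x : ℝ) (hx : 0 ≤ x) :
    0 < mlE α (-x) := by
  by_contra hneg
  push Not at hneg
  set S : Set ℝ := Icc 0 x ∩ (fun y => mlE α (-y)) ⁻¹' Iic 0 with hS
  have hclosed : IsClosed S :=
    (ml_continuousOn α hα x).preimage_isClosed_of_isClosed isClosed_Icc isClosed_Iic
  have hcomp : IsCompact S := isCompact_Icc.of_isClosed_subset hclosed inter_subset_left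
  obtain ⟨z, hz⟩ := hcomp.exists_isLeast ⟨x, ⟨hx, le_rfl⟩, hneg⟩
  have hzE : mlE α (-z) ≤ 0 := hz.1.2
  have hz0 : 0 ≤ z := hz.1.1.1
  have hpos : ∀ y, 0 ≤ y → y < z → 0 < mlE α (-y) := by
    intro y hy hyz
    by_contra h
    push Not at h
    exact absurd (hz.2 ⟨⟨hy, hyz.le.trans hz.1.1.2⟩, h⟩) (not_le.2 hyz)
  have hz1 : 0 < z := by
    rcases hz0.eq_or_lt with h | h
    · rw [← h, neg_zero, ml_zero] at hzE; linarith
    · exact h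
  have hid := ml_identity α hα hα1 z
  have hle : ∫ s in Ioc (0:ℝ) 1, (mlE α (-z) - mlE α (-(z * s ^ α))) * (1 - s) ^ (-α - 1) ≤ 0 := by
    apply setIntegral_nonpos measurableSet_Ioc
    intro s hs
    rcases hs.2.eq_or_lt with rfl | hlt
    · simp
    · have h1 : s ^ α < 1 := Real.rpow_lt_one hs.1.le hlt hα
      have h2 : 0 < s ^ α := Real.rpow_pos_of_pos hs.1 _
      have := hpos (z * s ^ α) (by positivity) (by nlinarith)
      exact mul_nonpos_of_nonpos_of_nonneg (by linarith) (Real.rpow_nonneg (by linarith) _)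
  have hg : 0 < Real.Gamma (1 - α) := Real.Gamma_pos_of_pos (by linarith)
  have h3 := mul_nonpos_of_nonneg_of_nonpos hα.le hle
  have h4 : Real.Gamma (1 - α) * z * mlE α (-z) ≤ 0 :=
    mul_nonpos_of_nonneg_of_nonpos (by positivity) hzE
  linarith
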